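/- Let σ > 1 and let f: ℝ → ℝ be 1-periodic and α-Hölder continuous for some 0 < α ≤ 1. Then there exist constants A, A* > 0 depending only on σ, f, α such that for all positive integers i, n, k with k < n − μ_i: (1) | (1/F_n^σ) · f(W_{i,k}/F_n)/sin(πW_{i,k}/F_n)^σ · f(W*_{i,n−k}/F_n)/sin(πW*_{i,n−k}/F_n)^σ − f(0)/(π^σ W_{i,k}^σ) · f(w_+*(i)φ^{−k})/sin(π w_+*(i) φ^{−k})^σ | ≤ A / (φ^{α(n−k)} i^{σ−α}), and (2) | (1/F_n^σ) · f(W_{i,k}/F_n)/sin(πW_{i,k}/F_n)^σ · f(W*_{i,n−k}/F_n)/sin(πW*_{i,n−k}/F_n)^σ − f(w_+(i)φ^{−(n−k)})/sin(π w_+(i) φ^{−(n−k)})^σ · f(0)/(π^σ (W*_{i,n−k})^σ) | ≤ A* / (φ^{αk} i^{σ−α}). -/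

import Mathlib

open Real

noncomputable def phi : ℝ := (1 + Real.sqrt 5) / 2

noncomputable def W (i : ℕ) : ℕ → ℤ
  | 0 => ⌊phi ^ 2 * (⌊phi * i⌋ : ℝ)⌋ - ⌊phi * (⌊phi * i⌋ : ℝ)⌋
  | 1 => ⌊phi * (⌊phi * i⌋ : ℝ)⌋
  | 2 => ⌊phi ^ 2 * (⌊phi * i⌋ : ℝ)⌋
  | (k + 3) => W i (k + 2) + W i (k + 1)

noncomputable def wplus (i : ℕ) : ℝ := phi⁻¹ ^ 2 * (W i 1 : ℝ) + phi⁻¹ * (W i 2 : ℝ)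

noncomputable def wminus (i : ℕ) : ℝ := phi ^ 2 * (W i 1 : ℝ) - phi * (W i 2 : ℝ)

noncomputable def eta (i : ℕ) : ℝ := -(wplus i * wminus i)


noncomputable def mu (i : ℕ) : ℕ := sInf {m : ℕ | 0 < m ∧ 2 * W i 1 < (Nat.fib (m + 2) : ℤ)}

noncomputable def Wstar (i n k : ℕ) : ℤ :=
  (-1) ^ k * ((Nat.fib (n - 1) : ℤ) * W i k - (Nat.fib n : ℤ) * W i (k - 1))

/-!
Multiplying `f t / sin (π t) ^ σ` by `t ^ σ` removes the singularity at `0` and leaves a function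
`h` that is `α`-Hölder on `[0, c]` for every `c < 1`. Write `x = W i k / F_n`,
`y = Wstar i n k / F_n`, `X = wplus i * φ ^ (k - n)` and `Y = -wminus i * φ ^ (-k)`. Up to the
factor `(F_n x y) ^ (-σ)`, the term of the sum is `h x * h y`, while its two limits are
`h 0 * h Y * (y / Y) ^ σ` and `h X * h 0 * (x / X) ^ σ`.

Binet's formula for the row `W i` gives `√5 * W i k = wplus i * φ ^ k - wminus i * ψ ^ k` and
`√5 * Wstar i n k = wplus i * ψ ^ (n - k) - wminus i * φ ^ (n - k)`, so that `x / X = 1 + O(Y)` and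
`y / Y = 1 + O(X)`. Hence the two differences are `O(x ^ α)` and `O(y ^ α)`. Since
`-wminus i = 1 + ψ * Int.fract (φ * i)` is bounded above and away from `0`, `wplus i` and `F_n x y`
are both of order `i`, and both stated error bounds follow.
-/

open Set Bornology
open scoped NNReal goldenRatio

section Holder

lemma holderOnWith_of_dist_le {X Y : Type*} [PseudoMetricSpace X] [PseudoMetricSpace Y]
    {f : X → Y} {s : Set X} {C r : ℝ≥0}
    (hf : ∀ x ∈ s, ∀ y ∈ s, dist (f x) (f y) ≤ C * dist x y ^ (r : ℝ)) :
    HolderOnWith C r f s := by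
  intro x hx y hy
  rw [edist_nndist, edist_nndist, ← ENNReal.coe_rpow_of_nonneg _ r.coe_nonneg]
  exact_mod_cast hf x hx y hy

lemma isBounded_image_of_holderOnWith {X Y : Type*} [PseudoMetricSpace X] [PseudoMetricSpace Y]
    {f : X → Y} {s : Set X} {C r : ℝ≥0} (hf : HolderOnWith C r f s) (hs : IsBounded s) :
    IsBounded (f '' s) := by
  obtain ⟨d, hd⟩ := Metric.isBounded_iff.1 hs
  refine Metric.isBounded_iff.2 ⟨C * d ^ (r : ℝ), ?_⟩
  rintro _ ⟨x, hx, rfl⟩ _ ⟨y, hy, rfl⟩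
  exact hf.dist_le_of_le hx hy (hd hx hy)

lemma exists_holderOnWith_mul {X R : Type*} [PseudoMetricSpace X] [NonUnitalSeminormedRing R]
    {f g : X → R} {s : Set X} {C D r : ℝ≥0} (hs : IsBounded s)
    (hf : HolderOnWith C r f s) (hg : HolderOnWith D r g s) :
    ∃ K, HolderOnWith K r (fun x ↦ f x * g x) s := by
  obtain ⟨M, hM, hfM⟩ := (isBounded_image_of_holderOnWith hf hs).exists_pos_norm_le
  obtain ⟨N, hN, hgN⟩ := (isBounded_image_of_holderOnWith hg hs).exists_pos_norm_le
  lift M to ℝ≥0 using hM.le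
  lift N to ℝ≥0 using hN.le
  refine ⟨C * N + M * D, holderOnWith_of_dist_le fun x hx y hy ↦ ?_⟩
  have hfxy := hf.dist_le hx hy
  have hgxy := hg.dist_le hx hy
  rw [dist_eq_norm] at hfxy hgxy ⊢
  calc ‖f x * g x - f y * g y‖ = ‖(f x - f y) * g x + f y * (g x - g y)‖ := by
        rw [sub_mul, mul_sub, sub_add_sub_cancel]
    _ ≤ ‖f x - f y‖ * ‖g x‖ + ‖f y‖ * ‖g x - g y‖ :=
        (norm_add_le _ _).trans (add_le_add (norm_mul_le _ _) (norm_mul_le _ _))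
    _ ≤ C * dist x y ^ (r : ℝ) * N + M * (D * dist x y ^ (r : ℝ)) := by
        gcongr
        exacts [hgN _ (mem_image_of_mem g hx), hfM _ (mem_image_of_mem f hy)]
    _ = ↑(C * N + M * D) * dist x y ^ (r : ℝ) := by push_cast; ring

lemma exists_lipschitzOnWith_of_contDiffOn {E F : Type*} [NormedAddCommGroup E] [NormedSpace ℝ E]
    [NormedAddCommGroup F] [NormedSpace ℝ F] {f : E → F} {s : Set E} (hf : ContDiffOn ℝ 1 f s)
    (hconv : Convex ℝ s) (hcomp : IsCompact s) : ∃ K, LipschitzOnWith K f s :=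
  (hf.locallyLipschitzOn hconv).exists_lipschitzOnWith_of_compact hcomp

lemma exists_holderOnWith_of_contDiffOn {E F : Type*} [NormedAddCommGroup E] [NormedSpace ℝ E]
    [NormedAddCommGroup F] [NormedSpace ℝ F] {f : E → F} {s : Set E} {r : ℝ≥0} (hr : r ≤ 1)
    (hf : ContDiffOn ℝ 1 f s) (hconv : Convex ℝ s) (hcomp : IsCompact s) :
    ∃ K, HolderOnWith K r f s := by
  obtain ⟨K, hK⟩ := exists_lipschitzOnWith_of_contDiffOn hf hconv hcomp
  obtain ⟨D, hD⟩ := Metric.isBounded_iff_nndist.1 hcomp.isBounded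
  have hbound : ∀ x ∈ s, ∀ y ∈ s, edist x y ≤ D := fun x hx y hy ↦ by
    rw [edist_nndist]
    exact_mod_cast hD hx hy
  exact ⟨_, (holderOnWith_one.2 hK).of_le hbound hr⟩

end Holder

section Rpow

lemma rpow_le_rpow_add_rpow_of_mem_Icc {a b u : ℝ} (ha : 0 < a) (hu : u ∈ Icc a b) (σ : ℝ) :
    u ^ σ ≤ a ^ σ + b ^ σ := by
  have hu0 : 0 < u := ha.trans_le hu.1
  rcases le_total 0 σ with hσ | hσ
  · exact (rpow_le_rpow hu0.le hu.2 hσ).trans (le_add_of_nonneg_left (rpow_nonneg ha.le σ))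
  · exact (rpow_le_rpow_of_nonpos ha hu.1 hσ).trans
      (le_add_of_nonneg_right (rpow_nonneg (hu0.le.trans hu.2) σ))

lemma exists_abs_rpow_sub_one_le (σ : ℝ) {q : ℝ} (hq : q < 1) :
    ∃ K : ℝ≥0, ∀ u : ℝ, |u - 1| ≤ q → |u ^ σ - 1| ≤ K * |u - 1| := by
  have hne : ∀ u ∈ Metric.closedBall (1 : ℝ) q, u ≠ 0 := by
    rintro _ hu rfl
    rw [Metric.mem_closedBall, dist_eq, zero_sub, abs_neg, abs_one] at hu
    exact hq.not_ge hu
  obtain ⟨K, hK⟩ := exists_lipschitzOnWith_of_contDiffOn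
    (contDiffOn_id.rpow_const_of_ne (p := σ) hne) (convex_closedBall 1 q)
    (isCompact_closedBall 1 q)
  refine ⟨K, fun u hu ↦ ?_⟩
  have hdist := hK.dist_le_mul u hu 1 (Metric.mem_closedBall_self ((abs_nonneg _).trans hu))
  simpa only [id, dist_eq, one_rpow] using hdist

lemma mul_rpow_div_rpow_le {σ α B C x T Q i : ℝ} (hα : 0 ≤ α) (hB : 0 < B) (hC : 0 ≤ C)
    (hx : 0 ≤ x) (hQ : 0 < Q) (hi : 0 < i) (hxQ : x ≤ B * i / Q) (hT : T / i ∈ Icc B⁻¹ B) :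
    C * x ^ α / T ^ σ ≤ C * B ^ α * (B ^ σ + B ^ (-σ)) / (Q ^ α * i ^ (σ - α)) := by
  have hTi : 0 < T / i := (inv_pos.2 hB).trans_le hT.1
  have hratio : (T / i) ^ (-σ) ≤ B ^ σ + B ^ (-σ) := by
    simpa only [inv_rpow hB.le, rpow_neg hB.le, inv_inv] using
      rpow_le_rpow_add_rpow_of_mem_Icc (inv_pos.2 hB) hT (-σ)
  calc C * x ^ α / T ^ σ = C * x ^ α * ((T / i) ^ (-σ) / i ^ σ) := by
        rw [rpow_neg hTi.le, div_rpow ((div_pos_iff_of_pos_right hi).1 hTi).le hi.le]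
        field_simp
    _ ≤ C * (B * i / Q) ^ α * ((B ^ σ + B ^ (-σ)) / i ^ σ) := by gcongr
    _ = C * B ^ α * (B ^ σ + B ^ (-σ)) / (Q ^ α * i ^ (σ - α)) := by
        rw [div_rpow (by positivity) hQ.le, mul_rpow hB.le hi.le, rpow_sub hi]
        field_simp

end Rpow

section Regularization

lemma contDiff_sinc {n : WithTop ℕ∞} : ContDiff ℝ n sinc := by
  refine contDiff_iff_contDiffAt.2 fun x ↦ AnalyticAt.contDiffAt ?_
  rcases eq_or_ne x 0 with rfl | hx
  · obtain ⟨p, hp⟩ := analyticAt_sin (x := 0)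
    rw [sinc_eq_dslope]
    exact hp.has_fpower_series_dslope_fslope.analyticAt
  · have heq : (fun y ↦ sin y / y) =ᶠ[nhds x] sinc :=
      (eventually_ne_nhds hx).mono fun y hy ↦ (sinc_of_ne_zero hy).symm
    exact (analyticAt_sin.div analyticAt_id hx).congr heq

lemma sinc_pi_mul_pos {t : ℝ} (ht : t ∈ Ico (0 : ℝ) 1) : 0 < sinc (π * t) := by
  rcases ht.1.eq_or_lt with rfl | ht0
  · rw [mul_zero, sinc_zero]
    exact one_pos
  · have hpos : 0 < π * t := mul_pos pi_pos ht0
    rw [sinc_of_ne_zero hpos.ne']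
    exact div_pos (sin_pos_of_pos_of_lt_pi hpos (mul_lt_of_lt_one_right pi_pos ht.2)) hpos

/-- The function `t ↦ t ^ σ * (f t / sin (π * t) ^ σ)`, written in terms of `sinc` so that it
takes its limit value `f 0 / π ^ σ` at `t = 0`. -/
noncomputable def regularization (σ : ℝ) (f : ℝ → ℝ) (t : ℝ) : ℝ :=
  f t * (π * sinc (π * t)) ^ (-σ)

variable {σ : ℝ} {f : ℝ → ℝ} {L α : ℝ≥0} {c : ℝ}

lemma regularization_zero : regularization σ f 0 = f 0 / π ^ σ := by
  rw [regularization, mul_zero, sinc_zero, mul_one, rpow_neg pi_pos.le, div_eq_mul_inv]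

lemma div_sin_rpow_eq_regularization {t : ℝ} (ht : t ∈ Ioo (0 : ℝ) 1) :
    f t / sin (π * t) ^ σ = regularization σ f t / t ^ σ := by
  have hsinc : 0 < sinc (π * t) := sinc_pi_mul_pos ⟨ht.1.le, ht.2⟩
  have hsin : sin (π * t) = t * (π * sinc (π * t)) := by
    rw [sinc_of_ne_zero (mul_pos pi_pos ht.1).ne']
    field_simp [ht.1.ne']
  rw [regularization, hsin, mul_rpow ht.1.le (by positivity), rpow_neg (by positivity)]
  field_simp

lemma exists_holderOnWith_regularization (σ : ℝ) (hα : α ≤ 1)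
    (hf : HolderOnWith L α f (Ico 0 1)) (hc : c < 1) :
    ∃ H, HolderOnWith H α (regularization σ f) (Icc 0 c) := by
  have hsub : Icc 0 c ⊆ Ico 0 1 := Icc_subset_Ico_right hc
  have hsmooth : ContDiffOn ℝ 1 (fun t ↦ (π * sinc (π * t)) ^ (-σ)) (Icc 0 c) :=
    (contDiff_const.mul (contDiff_sinc.comp (contDiff_const.mul contDiff_id))).contDiffOn
      |>.rpow_const_of_ne fun t ht ↦ (mul_pos pi_pos (sinc_pi_mul_pos (hsub ht))).ne'
  obtain ⟨K, hK⟩ := exists_holderOnWith_of_contDiffOn hα hsmooth (convex_Icc 0 c) isCompact_Icc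
  exact exists_holderOnWith_mul (Metric.isBounded_Icc 0 c) (hf.mono hsub) hK

lemma exists_abs_regularization_mul_sub_le (σ : ℝ) (hα : α ≤ 1)
    (hf : HolderOnWith L α f (Ico 0 1)) (hc : c < 1) {q : ℝ} (hq : q < 1) (D : ℝ≥0) :
    ∃ C : ℝ≥0, ∀ x y z : ℝ, x ∈ Ioc 0 c → y ∈ Ioc 0 c → z ∈ Ioc 0 c →
      |y / z - 1| ≤ q → |y / z - 1| ≤ D * x →
      |regularization σ f x * regularization σ f y
          - regularization σ f 0 * regularization σ f z * (y / z) ^ σ| ≤ C * x ^ (α : ℝ) := by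
  obtain ⟨H, hH⟩ := exists_holderOnWith_regularization σ hα hf hc
  obtain ⟨M, hM, hbound⟩ :=
    (isBounded_image_of_holderOnWith hH (Metric.isBounded_Icc 0 c)).exists_pos_norm_le
  obtain ⟨K, hK⟩ := exists_abs_rpow_sub_one_le σ hq
  lift M to ℝ≥0 using hM.le
  refine ⟨H * M + M * (H * D ^ (α : ℝ)) + M * M * (K * D), fun x y z hx hy hz hzq hzD ↦ ?_⟩
  set h := regularization σ f
  have h_le : ∀ t ∈ Icc 0 c, |h t| ≤ M := fun t ht ↦ hbound _ (mem_image_of_mem h ht)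
  have h0 : (0 : ℝ) ∈ Icc 0 c := ⟨le_rfl, hx.1.le.trans hx.2⟩
  have hx_zero : |h x - h 0| ≤ H * x ^ (α : ℝ) := by
    refine hH.dist_le_of_le (Ioc_subset_Icc_self hx) h0 ?_
    rw [dist_eq, sub_zero, abs_of_pos hx.1]
  have hy_z : |h y - h z| ≤ H * (D ^ (α : ℝ) * x ^ (α : ℝ)) := by
    rw [← mul_rpow D.coe_nonneg hx.1.le]
    refine hH.dist_le_of_le (Ioc_subset_Icc_self hy) (Ioc_subset_Icc_self hz) ?_
    calc dist y z = z * |y / z - 1| := by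
          rw [dist_eq, ← abs_of_pos hz.1, ← abs_mul, abs_of_pos hz.1, mul_sub, mul_one,
            mul_div_cancel₀ _ hz.1.ne']
      _ ≤ 1 * |y / z - 1| := by gcongr; exact hz.2.trans hc.le
      _ ≤ D * x := (one_mul _).trans_le hzD
  have h_rpow : |1 - (y / z) ^ σ| ≤ K * (D * x ^ (α : ℝ)) := by
    rw [abs_sub_comm]
    refine (hK _ hzq).trans ?_
    gcongr
    refine hzD.trans ?_
    gcongr
    exact self_le_rpow_of_le_one hx.1.le (hx.2.trans hc.le) hα
  calc |h x * h y - h 0 * h z * (y / z) ^ σ|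
      = |(h x - h 0) * h y + h 0 * (h y - h z) + h 0 * h z * (1 - (y / z) ^ σ)| := by ring_nf
    _ ≤ |h x - h 0| * |h y| + |h 0| * |h y - h z| + |h 0| * |h z| * |1 - (y / z) ^ σ| := by
        simpa only [abs_mul] using abs_add_three ((h x - h 0) * h y) (h 0 * (h y - h z))
          (h 0 * h z * (1 - (y / z) ^ σ))
    _ ≤ H * x ^ (α : ℝ) * M + M * (H * (D ^ (α : ℝ) * x ^ (α : ℝ)))
          + M * M * (K * (D * x ^ (α : ℝ))) := by
        have hx_rpow : 0 ≤ x ^ (α : ℝ) := rpow_nonneg hx.1.le α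
        gcongr
        exacts [h_le _ (Ioc_subset_Icc_self hy), h_le _ h0, h_le _ h0,
          h_le _ (Ioc_subset_Icc_self hz)]
    _ = _ := by push_cast; ring

/-- The term of the tensor product sum with modulus `F` at the pair of residues `(w, v)`. -/
noncomputable def tensorTerm (σ : ℝ) (f : ℝ → ℝ) (F w v : ℝ) : ℝ :=
  1 / F ^ σ * (f (w / F) / sin (π * w / F) ^ σ) * (f (v / F) / sin (π * v / F) ^ σ)

/-- The limit of `tensorTerm σ f F w v` as `F` tends to infinity while `w` stays fixed and `v / F`
tends to `z`. -/
noncomputable def limitTerm (σ : ℝ) (f : ℝ → ℝ) (w z : ℝ) : ℝ :=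
  f 0 / (π ^ σ * w ^ σ) * (f z / sin (π * z) ^ σ)

lemma tensorTerm_comm (σ : ℝ) (f : ℝ → ℝ) (F w v : ℝ) :
    tensorTerm σ f F w v = tensorTerm σ f F v w :=
  mul_right_comm _ _ _

lemma exists_abs_tensorTerm_sub_limitTerm_le (σ : ℝ) (hα : α ≤ 1)
    (hf : HolderOnWith L α f (Ico 0 1)) (hc : c < 1) {q : ℝ} (hq : q < 1) (D : ℝ≥0) :
    ∃ C : ℝ≥0, ∀ F w v z : ℝ, 0 < F → w / F ∈ Ioc 0 c → v / F ∈ Ioc 0 c → z ∈ Ioc 0 c →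
      |v / F / z - 1| ≤ q → |v / F / z - 1| ≤ D * (w / F) →
      |tensorTerm σ f F w v - limitTerm σ f w z| ≤ C * (w / F) ^ (α : ℝ) / (w * v / F) ^ σ := by
  obtain ⟨C, hC⟩ := exists_abs_regularization_mul_sub_le σ hα hf hc hq D
  refine ⟨C, fun F w v z hF hx hy hz hzq hzD ↦ ?_⟩
  have hw : 0 < w := (div_pos_iff_of_pos_right hF).1 hx.1
  have hv : 0 < v := (div_pos_iff_of_pos_right hF).1 hy.1
  have hz0 : 0 < z := hz.1
  have hlt {t : ℝ} (ht : t ∈ Ioc 0 c) : t ∈ Ioo (0 : ℝ) 1 := ⟨ht.1, ht.2.trans_lt hc⟩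
  rw [tensorTerm, limitTerm, mul_div_assoc π w F, mul_div_assoc π v F,
    div_sin_rpow_eq_regularization (hlt hx), div_sin_rpow_eq_regularization (hlt hy),
    div_sin_rpow_eq_regularization (hlt hz), ← div_div, ← regularization_zero]
  have hT : 0 < (w * v / F) ^ σ := by positivity
  rw [le_div_iff₀ hT, ← abs_of_pos hT, ← abs_mul]
  refine (congrArg abs ?_).trans_le (hC _ _ z hx hy hz hzq hzD)
  rw [div_rpow (by positivity : 0 ≤ v / F) hz0.le, div_rpow (by positivity : 0 ≤ w * v) hF.le,
    mul_rpow hw.le hv.le, div_rpow hw.le hF.le, div_rpow hv.le hF.le]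
  field_simp

lemma exists_abs_tensorTerm_sub_limitTerm_le_div (σ : ℝ) (hα : α ≤ 1)
    (hf : HolderOnWith L α f (Ico 0 1)) (hc : c < 1) {q : ℝ} (hq : q < 1) (D : ℝ≥0)
    {B : ℝ} (hB : 0 < B) :
    ∃ A : ℝ, 0 < A ∧ ∀ F w v z i Q : ℝ, 0 < F → 0 < i → 0 < Q →
      w / F ∈ Ioc 0 c → v / F ∈ Ioc 0 c → z ∈ Ioc 0 c →
      |v / F / z - 1| ≤ q → |v / F / z - 1| ≤ D * (w / F) →
      w / F ≤ B * i / Q → w * v / F / i ∈ Icc B⁻¹ B →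
      |tensorTerm σ f F w v - limitTerm σ f w z| ≤ A / (Q ^ (α : ℝ) * i ^ (σ - α)) := by
  obtain ⟨C, hC⟩ := exists_abs_tensorTerm_sub_limitTerm_le σ hα hf hc hq D
  refine ⟨(C + 1) * B ^ (α : ℝ) * (B ^ σ + B ^ (-σ)), by positivity,
    fun F w v z i Q hF hi hQ hx hy hz hzq hzD hxQ hT ↦ ?_⟩
  calc |tensorTerm σ f F w v - limitTerm σ f w z|
      ≤ C * (w / F) ^ (α : ℝ) / (w * v / F) ^ σ := hC F w v z hF hx hy hz hzq hzD
    _ ≤ C * B ^ (α : ℝ) * (B ^ σ + B ^ (-σ)) / (Q ^ (α : ℝ) * i ^ (σ - α)) :=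
        mul_rpow_div_rpow_le α.coe_nonneg hB C.coe_nonneg hx.1.le hQ hi hxQ hT
    _ ≤ (C + 1) * B ^ (α : ℝ) * (B ^ σ + B ^ (-σ)) / (Q ^ (α : ℝ) * i ^ (σ - α)) := by
        gcongr
        exact le_add_of_nonneg_right zero_le_one

end Regularization

section GoldenRatio

lemma three_halves_le_goldenRatio : 3 / 2 ≤ φ := by
  have h : (2 : ℝ) ≤ √5 := le_sqrt_of_sq_le (by norm_num)
  rw [goldenRatio]
  linarith

lemma goldenRatio_mul_floor (i : ℕ) :
    φ * ⌊φ * i⌋ = i + ⌊φ * i⌋ + ψ * Int.fract (φ * i) := by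
  rw [Int.fract, ← one_sub_goldenRatio]
  linear_combination (i : ℝ) * goldenRatio_sq

lemma floor_goldenRatio_mul_floor {i : ℕ} (hi : 0 < i) :
    ⌊φ * ⌊φ * i⌋⌋ = i + ⌊φ * i⌋ - 1 := by
  have hfract : 0 < Int.fract (φ * i) :=
    Int.fract_pos.2 ((goldenRatio_irrational.mul_natCast hi.ne').ne_int _)
  rw [Int.floor_eq_iff, goldenRatio_mul_floor]
  push_cast
  constructor
  · nlinarith [Int.fract_lt_one (φ * i), neg_one_lt_goldenConj, goldenConj_neg]
  · linarith [mul_neg_of_neg_of_pos goldenConj_neg hfract]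

lemma sqrt_five_mul_eq_of_fib_recurrence {u : ℕ → ℝ} (hu : ∀ k, u (k + 2) = u (k + 1) + u k)
    (k : ℕ) : √5 * u k = (u 1 - ψ * u 0) * φ ^ k - (u 1 - φ * u 0) * ψ ^ k := by
  induction k using Nat.twoStepInduction with
  | zero => rw [← goldenRatio_sub_goldenConj]; ring
  | one => rw [← goldenRatio_sub_goldenConj]; ring
  | more k ih ih' =>
    rw [hu]
    linear_combination ih + ih' - (u 1 - ψ * u 0) * φ ^ k * goldenRatio_sq
      + (u 1 - φ * u 0) * ψ ^ k * goldenConj_sq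

lemma sqrt_five_ne_zero : √5 ≠ 0 :=
  (sqrt_pos.2 (by norm_num)).ne'

lemma sqrt_five_mul_fib (n : ℕ) : √5 * Nat.fib n = φ ^ n - ψ ^ n := by
  rw [coe_fib_eq, mul_div_cancel₀ _ sqrt_five_ne_zero]

lemma goldenRatio_pow_mul_goldenConj_pow (n : ℕ) : φ ^ n * ψ ^ n = (-1) ^ n := by
  rw [← mul_pow, goldenRatio_mul_goldenConj]

lemma goldenConj_pow (n : ℕ) : ψ ^ n = (-1) ^ n / φ ^ n := by
  rw [eq_div_iff (pow_ne_zero _ goldenRatio_ne_zero), mul_comm,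
    goldenRatio_pow_mul_goldenConj_pow]

lemma goldenRatio_pow_le_mul_fib {n : ℕ} (hn : 0 < n) : φ ^ n ≤ φ ^ 2 * Nat.fib n := by
  obtain ⟨n, rfl⟩ := Nat.exists_eq_add_one.2 hn
  have hmono : (Nat.fib n : ℝ) ≤ Nat.fib (n + 1) := mod_cast Nat.fib_le_fib_succ
  rw [← goldenRatio_mul_fib_succ_add_fib, goldenRatio_sq]
  linarith

lemma fib_le_goldenRatio_pow (n : ℕ) : (Nat.fib n : ℝ) ≤ φ ^ n := by
  rcases n with _ | n
  · simp
  rw [← goldenRatio_mul_fib_succ_add_fib]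
  nlinarith [one_lt_goldenRatio, (Nat.fib (n + 1)).cast_nonneg (α := ℝ),
    (Nat.fib n).cast_nonneg (α := ℝ)]

end GoldenRatio

lemma abs_perturbed_ratio_div_sub_one_le {m X Y a b : ℝ} (hm : 6 ≤ m) (hX : 3 / 2 ≤ m * X)
    (hY : 3 / 2 ≤ m * Y) (ha : |a| ≤ 1) (hb : |b| ≤ 1) :
    |(m * X + a * Y) / (m - a * b / m) / X - 1| ≤ 4 / 5 * Y := by
  have hm0 : 0 < m := by linarith
  have hX0 : 0 < X := pos_of_mul_pos_right (by linarith : 0 < m * X) hm0.le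
  have hY0 : 0 < Y := pos_of_mul_pos_right (by linarith : 0 < m * Y) hm0.le
  have hinv : 1 / m ≤ 1 / 6 := one_div_le_one_div_of_le (by norm_num) hm
  have hab : |a * b| ≤ 1 := by
    rw [abs_mul]
    exact mul_le_one₀ ha (abs_nonneg b) hb
  have hden : m - 1 / m ≤ m - a * b / m := by
    gcongr
    exact (abs_le.1 hab).2
  have hXm : X / m ≤ 2 / 3 * (X * Y) := by
    rw [div_le_iff₀ hm0]
    nlinarith
  have hYm : Y ≤ 2 / 3 * m * (X * Y) := by nlinarith
  have hnum : |a * Y + a * b * (X / m)| ≤ Y + X / m := by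
    refine (abs_add_le _ _).trans ?_
    rw [abs_mul, abs_mul (a * b), abs_of_pos hY0, abs_of_pos (div_pos hX0 hm0)]
    exact add_le_add (mul_le_of_le_one_left hY0.le ha)
      (mul_le_of_le_one_left (div_pos hX0 hm0).le hab)
  have hden_pos : 0 < m - a * b / m := by linarith
  have hscale : 0 < (m - a * b / m) * X := mul_pos hden_pos hX0
  rw [div_div, div_sub_one hscale.ne', abs_div, abs_of_pos hscale, div_le_iff₀ hscale]
  calc |m * X + a * Y - (m - a * b / m) * X| = |a * Y + a * b * (X / m)| := by ring_nf
    _ ≤ (2 / 3 * m + 2 / 3) * (X * Y) := by linarith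
    _ ≤ 4 / 5 * (m - 1 / m) * (X * Y) := by gcongr; linarith
    _ ≤ 4 / 5 * (m - a * b / m) * (X * Y) := by gcongr
    _ = 4 / 5 * Y * ((m - a * b / m) * X) := by ring

section Wythoff

variable {i k N : ℕ}

lemma phi_eq_goldenRatio : phi = φ := rfl

lemma W_add_two (i k : ℕ) : W i (k + 2) = W i (k + 1) + W i k := by
  cases k with
  | zero => exact (add_sub_cancel _ _).symm
  | succ k => rfl

lemma W_zero (i : ℕ) : W i 0 = ⌊φ * i⌋ := by
  rw [W, phi_eq_goldenRatio, goldenRatio_sq, add_one_mul, Int.floor_add_intCast,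
    add_sub_cancel_left]

lemma W_one (hi : 0 < i) : W i 1 = i + ⌊φ * i⌋ - 1 := by
  rw [W, phi_eq_goldenRatio, floor_goldenRatio_mul_floor hi]

lemma wplus_eq (i : ℕ) : wplus i = W i 1 - ψ * W i 0 := by
  rw [wplus, phi_eq_goldenRatio, inv_goldenRatio, W_add_two i 0]
  push_cast
  linear_combination (W i 1 : ℝ) * goldenConj_sq

lemma wminus_eq (i : ℕ) : wminus i = W i 1 - φ * W i 0 := by
  rw [wminus, phi_eq_goldenRatio, W_add_two i 0]
  push_cast
  linear_combination (W i 1 : ℝ) * goldenRatio_sq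

lemma sqrt_five_mul_W (i k : ℕ) : √5 * W i k = wplus i * φ ^ k - wminus i * ψ ^ k := by
  rw [wplus_eq, wminus_eq]
  exact sqrt_five_mul_eq_of_fib_recurrence (u := fun k ↦ W i k)
    (fun k ↦ mod_cast W_add_two i k) k

lemma sqrt_five_mul_Wstar (i N : ℕ) (hk : 0 < k) :
    √5 * Wstar i (k + N) k = wplus i * ψ ^ N - wminus i * φ ^ N := by
  obtain ⟨j, rfl⟩ := Nat.exists_eq_add_one.2 hk
  have hsign : ((-1 : ℝ) ^ j) ^ 2 = 1 := by rw [← pow_mul, mul_comm, pow_mul, neg_one_sq, one_pow]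
  have hcross : √5 * Nat.fib (j + N) * (√5 * W i (j + 1))
      - √5 * Nat.fib (j + 1 + N) * (√5 * W i j)
      = (-1) ^ j * √5 * (wminus i * φ ^ N - wplus i * ψ ^ N) := by
    rw [sqrt_five_mul_fib, sqrt_five_mul_fib, sqrt_five_mul_W, sqrt_five_mul_W,
      ← goldenRatio_pow_mul_goldenConj_pow, ← goldenRatio_sub_goldenConj]
    ring
  refine mul_left_cancel₀ sqrt_five_ne_zero ?_
  rw [Wstar, show j + 1 + N - 1 = j + N by lia, Nat.add_sub_cancel]
  push_cast
  linear_combination (-1) ^ (j + 1) * hcross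
    + √5 * (wplus i * ψ ^ N - wminus i * φ ^ N) * hsign

lemma neg_wminus_mem_Icc (hi : 0 < i) : -wminus i ∈ Icc (ψ ^ 2) 1 := by
  have hw : -wminus i = 1 + ψ * Int.fract (φ * i) := by
    rw [wminus_eq, W_one hi, W_zero, goldenRatio_mul_floor]
    push_cast
    ring
  rw [hw, goldenConj_sq]
  constructor
  · nlinarith [Int.fract_lt_one (φ * i), goldenConj_neg]
  · linarith [mul_nonpos_of_nonpos_of_nonneg goldenConj_neg.le (Int.fract_nonneg (φ * i))]

lemma wplus_mem_Icc (hi : 0 < i) : wplus i ∈ Icc (φ * i) (4 * i) := by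
  have hi_one : (1 : ℝ) ≤ i := mod_cast hi
  have hfloor_le : (⌊φ * i⌋ : ℝ) ≤ φ * i := Int.floor_le _
  have hi_le_floor : (i : ℝ) ≤ ⌊φ * i⌋ := by
    exact_mod_cast Int.le_floor.2 (le_mul_of_one_le_left i.cast_nonneg one_lt_goldenRatio.le)
  have hw : wplus i = i - 1 + φ * ⌊φ * i⌋ := by
    rw [wplus_eq, W_one hi, W_zero]
    push_cast
    linear_combination -(⌊φ * i⌋ : ℝ) * one_sub_goldenRatio
  rw [hw]
  constructor
  · nlinarith [goldenRatio_pos]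
  · nlinarith [goldenRatio_lt_two, goldenRatio_sq]

lemma two_mul_W_one_lt_fib (hN : mu i < N) : 2 * W i 1 < Nat.fib (N + 1) := by
  have hne : {m : ℕ | 0 < m ∧ 2 * W i 1 < (Nat.fib (m + 2) : ℤ)}.Nonempty := by
    refine ⟨(2 * W i 1).toNat + 3, by lia, ?_⟩
    have hfib : (2 * W i 1).toNat + 5 ≤ Nat.fib ((2 * W i 1).toNat + 5) :=
      Nat.le_fib_self (by lia)
    lia
  exact (Nat.sInf_mem hne).2.trans_le (mod_cast Nat.fib_mono (Nat.add_lt_add_right hN 1))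

lemma two_mul_wplus_le (hi : 0 < i) (hN : mu i < N) : 2 * wplus i ≤ φ ^ N := by
  have hfib : 2 * (W i 1 : ℝ) + 1 ≤ Nat.fib (N + 1) := mod_cast two_mul_W_one_lt_fib hN
  have hW : √5 * W i 1 = wplus i * φ - wminus i * ψ := by simpa using sqrt_five_mul_W i 1
  have hbinet : √5 * Nat.fib (N + 1) = φ ^ N * φ - ψ ^ (N + 1) := by
    rw [sqrt_five_mul_fib, pow_succ]
  have hψ : -1 ≤ ψ ^ (N + 1) := by
    refine (abs_le.1 ?_).1
    rw [abs_pow]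
    exact pow_le_one₀ (abs_nonneg _) (abs_le.2 ⟨neg_one_lt_goldenConj.le, by
      linarith [goldenConj_neg]⟩)
  have hwψ : -(wminus i * ψ) ≥ ψ := by nlinarith [(neg_wminus_mem_Icc hi).2, goldenConj_neg]
  refine le_of_mul_le_mul_right ?_ goldenRatio_pos
  have hmul := mul_le_mul_of_nonneg_left hfib (sqrt_nonneg 5)
  linarith [goldenRatio_add_goldenConj, goldenRatio_sub_goldenConj]

lemma W_div_fib_eq (i k N : ℕ) :
    (W i k : ℝ) / Nat.fib (k + N) =
      (φ ^ (k + N) * (wplus i / φ ^ N) + (-1) ^ k * (-wminus i / φ ^ k)) /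
        (φ ^ (k + N) - (-1) ^ k * (-1) ^ N / φ ^ (k + N)) := by
  rw [← mul_div_mul_left _ _ sqrt_five_ne_zero, sqrt_five_mul_W,
    sqrt_five_mul_fib, goldenConj_pow k, goldenConj_pow (k + N), pow_add (-1)]
  field_simp
  ring

lemma Wstar_div_fib_eq (i N : ℕ) (hk : 0 < k) :
    (Wstar i (k + N) k : ℝ) / Nat.fib (k + N) =
      (φ ^ (k + N) * (-wminus i / φ ^ k) + (-1) ^ N * (wplus i / φ ^ N)) /
        (φ ^ (k + N) - (-1) ^ N * (-1) ^ k / φ ^ (k + N)) := by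
  rw [← mul_div_mul_left _ _ sqrt_five_ne_zero,
    sqrt_five_mul_Wstar i N hk, sqrt_five_mul_fib, goldenConj_pow N, goldenConj_pow (k + N),
    pow_add (-1), mul_comm ((-1) ^ k)]
  field_simp
  ring

lemma goldenRatio_cube_le_pow (hi : 0 < i) (hN : mu i < N) : φ ^ 3 ≤ φ ^ N := by
  have hi_one : (1 : ℝ) ≤ i := mod_cast hi
  have hlt : φ ^ 2 < φ ^ N := by
    nlinarith [(wplus_mem_Icc hi).1, two_mul_wplus_le hi hN, goldenRatio_lt_two, goldenRatio_pos]
  exact pow_le_pow_right₀ one_lt_goldenRatio.le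
    ((pow_lt_pow_iff_right₀ one_lt_goldenRatio).1 hlt)

lemma six_le_goldenRatio_pow (hi : 0 < i) (hk : 0 < k) (hN : mu i < N) : 6 ≤ φ ^ (k + N) := by
  have hφk : φ ≤ φ ^ k := le_self_pow₀ one_lt_goldenRatio.le hk.ne'
  calc 6 ≤ φ * φ ^ 3 := by nlinarith [three_halves_le_goldenRatio, goldenRatio_sq]
    _ ≤ φ ^ k * φ ^ N :=
        mul_le_mul hφk (goldenRatio_cube_le_pow hi hN) (by positivity) (by positivity)
    _ = φ ^ (k + N) := (pow_add φ k N).symm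

lemma wplus_div_mem_Ioc (hi : 0 < i) (hN : mu i < N) : wplus i / φ ^ N ∈ Ioc 0 (1 / 2) := by
  have hi0 : (0 : ℝ) < i := mod_cast hi
  have hw : 0 < wplus i := (mul_pos goldenRatio_pos hi0).trans_le (wplus_mem_Icc hi).1
  refine ⟨by positivity, ?_⟩
  rw [div_le_iff₀ (by positivity)]
  linarith [two_mul_wplus_le hi hN]

lemma neg_wminus_div_mem_Ioc (hi : 0 < i) (hk : 0 < k) : -wminus i / φ ^ k ∈ Ioc 0 (2 / 3) := by
  have hφk : φ ≤ φ ^ k := le_self_pow₀ one_lt_goldenRatio.le hk.ne'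
  refine ⟨div_pos ((sq_pos_of_neg goldenConj_neg).trans_le (neg_wminus_mem_Icc hi).1)
    (by positivity), ?_⟩
  rw [div_le_iff₀ (by positivity)]
  linarith [(neg_wminus_mem_Icc hi).2, three_halves_le_goldenRatio]

lemma three_halves_le_pow_mul_wplus_div (hi : 0 < i) (hk : 0 < k) (N : ℕ) :
    3 / 2 ≤ φ ^ (k + N) * (wplus i / φ ^ N) := by
  have hi_one : (1 : ℝ) ≤ i := mod_cast hi
  have hφk : φ ≤ φ ^ k := le_self_pow₀ one_lt_goldenRatio.le hk.ne'
  calc 3 / 2 ≤ φ * (φ * 1) := by nlinarith [three_halves_le_goldenRatio]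
    _ ≤ φ ^ k * wplus i := by
        gcongr
        exact le_trans (by gcongr) (wplus_mem_Icc hi).1
    _ = φ ^ (k + N) * (wplus i / φ ^ N) := by rw [pow_add]; field_simp

lemma three_halves_le_pow_mul_neg_wminus_div (hi : 0 < i) (k : ℕ) (hN : mu i < N) :
    3 / 2 ≤ φ ^ (k + N) * (-wminus i / φ ^ k) := by
  calc 3 / 2 ≤ φ := three_halves_le_goldenRatio
    _ = φ ^ 3 * ψ ^ 2 := by
        linear_combination -φ * (φ * ψ - 1) * goldenRatio_mul_goldenConj
    _ ≤ φ ^ N * -wminus i := mul_le_mul (goldenRatio_cube_le_pow hi hN)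
        (neg_wminus_mem_Icc hi).1 (sq_nonneg ψ) (by positivity)
    _ = φ ^ (k + N) * (-wminus i / φ ^ k) := by rw [pow_add]; field_simp

lemma abs_W_div_fib_div_sub_one_le (hi : 0 < i) (hk : 0 < k) (hN : mu i < N) :
    |(W i k : ℝ) / Nat.fib (k + N) / (wplus i / φ ^ N) - 1| ≤ 4 / 5 * (-wminus i / φ ^ k) := by
  rw [W_div_fib_eq]
  exact abs_perturbed_ratio_div_sub_one_le (six_le_goldenRatio_pow hi hk hN)
    (three_halves_le_pow_mul_wplus_div hi hk N) (three_halves_le_pow_mul_neg_wminus_div hi k hN)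
    (abs_neg_one_pow k).le (abs_neg_one_pow N).le

lemma abs_Wstar_div_fib_div_sub_one_le (hi : 0 < i) (hk : 0 < k) (hN : mu i < N) :
    |(Wstar i (k + N) k : ℝ) / Nat.fib (k + N) / (-wminus i / φ ^ k) - 1|
      ≤ 4 / 5 * (wplus i / φ ^ N) := by
  rw [Wstar_div_fib_eq i N hk]
  exact abs_perturbed_ratio_div_sub_one_le (six_le_goldenRatio_pow hi hk hN)
    (three_halves_le_pow_mul_neg_wminus_div hi k hN) (three_halves_le_pow_mul_wplus_div hi hk N)
    (abs_neg_one_pow N).le (abs_neg_one_pow k).le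

lemma W_div_fib_mem_Icc (hi : 0 < i) (hk : 0 < k) (hN : mu i < N) :
    (W i k : ℝ) / Nat.fib (k + N) ∈
      Icc (7 / 15 * (wplus i / φ ^ N)) (23 / 15 * (wplus i / φ ^ N)) := by
  have hX : 0 < wplus i / φ ^ N := (wplus_div_mem_Ioc hi hN).1
  have hY : -wminus i / φ ^ k ≤ 2 / 3 := (neg_wminus_div_mem_Ioc hi hk).2
  have hrel := abs_le.1 (abs_W_div_fib_div_sub_one_le hi hk hN)
  rw [mem_Icc, ← le_div_iff₀ hX, ← div_le_iff₀ hX]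
  constructor <;> linarith [hrel.1, hrel.2]

lemma Wstar_div_fib_mem_Icc (hi : 0 < i) (hk : 0 < k) (hN : mu i < N) :
    (Wstar i (k + N) k : ℝ) / Nat.fib (k + N) ∈
      Icc (3 / 5 * (-wminus i / φ ^ k)) (7 / 5 * (-wminus i / φ ^ k)) := by
  have hX : wplus i / φ ^ N ≤ 1 / 2 := (wplus_div_mem_Ioc hi hN).2
  have hY : 0 < -wminus i / φ ^ k := (neg_wminus_div_mem_Ioc hi hk).1
  have hrel := abs_le.1 (abs_Wstar_div_fib_div_sub_one_le hi hk hN)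
  rw [mem_Icc, ← le_div_iff₀ hY, ← div_le_iff₀ hY]
  constructor <;> linarith [hrel.1, hrel.2]

lemma eta_mem_Icc (hi : 0 < i) : eta i ∈ Icc (3 / 8 * (i : ℝ)) (4 * i) := by
  have hp := wplus_mem_Icc hi
  have hs := neg_wminus_mem_Icc hi
  have hp0 : 0 ≤ wplus i := (mul_nonneg goldenRatio_pos.le i.cast_nonneg).trans hp.1
  have hψ : 1 / 4 ≤ ψ ^ 2 := by nlinarith [three_halves_le_goldenRatio, one_sub_goldenRatio]
  rw [eta, ← mul_neg]
  constructor
  · calc 3 / 8 * (i : ℝ) = 3 / 2 * i * (1 / 4) := by ring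
      _ ≤ φ * i * ψ ^ 2 := by gcongr; exact three_halves_le_goldenRatio
      _ ≤ wplus i * -wminus i := mul_le_mul hp.1 hs.1 (sq_nonneg ψ) hp0
  · exact (mul_le_of_le_one_right hp0 hs.2).trans hp.2

lemma W_mul_Wstar_div_fib_mem_Icc (hi : 0 < i) (hk : 0 < k) (hN : mu i < N) :
    (W i k * Wstar i (k + N) k : ℝ) / Nat.fib (k + N) ∈
      Icc (7 / 100 * eta i) (161 / 75 * eta i) := by
  have hx := W_div_fib_mem_Icc hi hk hN
  have hy := Wstar_div_fib_mem_Icc hi hk hN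
  have hX := (wplus_div_mem_Ioc hi hN).1
  have hY := (neg_wminus_div_mem_Ioc hi hk).1
  have heta : eta i = φ ^ (k + N) * (wplus i / φ ^ N * (-wminus i / φ ^ k)) := by
    rw [eta, pow_add]
    field_simp
  have hkN : 0 < k + N := Nat.add_pos_left hk N
  have hF0 : (0 : ℝ) < Nat.fib (k + N) := mod_cast Nat.fib_pos.2 hkN
  have hF_ge : φ ^ (k + N) / 4 ≤ Nat.fib (k + N) := by
    nlinarith [goldenRatio_pow_le_mul_fib hkN, goldenRatio_lt_two, goldenRatio_sq]
  have hF_le := fib_le_goldenRatio_pow (k + N)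
  generalize wplus i / φ ^ N = X at *
  generalize -wminus i / φ ^ k = Y at *
  have hx0 : 0 ≤ (W i k : ℝ) / Nat.fib (k + N) := le_trans (by positivity) hx.1
  have hy0 : 0 ≤ (Wstar i (k + N) k : ℝ) / Nat.fib (k + N) := le_trans (by positivity) hy.1
  have hterm : (W i k * Wstar i (k + N) k : ℝ) / Nat.fib (k + N) = Nat.fib (k + N) *
      ((W i k : ℝ) / Nat.fib (k + N) * ((Wstar i (k + N) k : ℝ) / Nat.fib (k + N))) := by
    field_simp
  rw [hterm, heta]
  constructor
  · calc 7 / 100 * (φ ^ (k + N) * (X * Y))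
        = φ ^ (k + N) / 4 * (7 / 15 * X * (3 / 5 * Y)) := by ring
      _ ≤ _ := mul_le_mul hF_ge (mul_le_mul hx.1 hy.1 (by positivity) hx0)
          (by positivity) hF0.le
  · calc _ ≤ φ ^ (k + N) * (23 / 15 * X * (7 / 5 * Y)) :=
          mul_le_mul hF_le (mul_le_mul hx.2 hy.2 hy0 (by positivity)) (mul_nonneg hx0 hy0)
          (by positivity)
      _ = 161 / 75 * (φ ^ (k + N) * (X * Y)) := by ring

lemma W_mul_Wstar_div_fib_div_mem_Icc (hi : 0 < i) (hk : 0 < k) (hN : mu i < N) :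
    (W i k * Wstar i (k + N) k : ℝ) / Nat.fib (k + N) / i ∈ Icc (50⁻¹) 50 := by
  have hi0 : (0 : ℝ) < i := mod_cast hi
  have hterm := W_mul_Wstar_div_fib_mem_Icc hi hk hN
  have heta := eta_mem_Icc hi
  rw [mem_Icc, le_div_iff₀ hi0, div_le_iff₀ hi0]
  constructor <;> linarith [hterm.1, hterm.2, heta.1, heta.2]

lemma W_div_fib_le (hi : 0 < i) (hk : 0 < k) (hN : mu i < N) :
    (W i k : ℝ) / Nat.fib (k + N) ≤ 50 * i / φ ^ N := by
  calc (W i k : ℝ) / Nat.fib (k + N) ≤ 23 / 15 * (wplus i / φ ^ N) :=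
        (W_div_fib_mem_Icc hi hk hN).2
    _ = 23 / 15 * wplus i / φ ^ N := (mul_div_assoc _ _ _).symm
    _ ≤ 50 * i / φ ^ N := by gcongr ?_ / _; linarith [(wplus_mem_Icc hi).2, i.cast_nonneg (α := ℝ)]

lemma Wstar_div_fib_le (hi : 0 < i) (hk : 0 < k) (hN : mu i < N) :
    (Wstar i (k + N) k : ℝ) / Nat.fib (k + N) ≤ 50 * i / φ ^ k := by
  have hi_one : (1 : ℝ) ≤ i := mod_cast hi
  calc (Wstar i (k + N) k : ℝ) / Nat.fib (k + N) ≤ 7 / 5 * (-wminus i / φ ^ k) :=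
        (Wstar_div_fib_mem_Icc hi hk hN).2
    _ = 7 / 5 * -wminus i / φ ^ k := (mul_div_assoc _ _ _).symm
    _ ≤ 50 * i / φ ^ k := by gcongr ?_ / _; linarith [(neg_wminus_mem_Icc hi).2]

lemma exists_abs_tensorTerm_W_Wstar_sub_limitTerm_le (σ : ℝ) {f : ℝ → ℝ} {L α : ℝ≥0}
    (hα : α ≤ 1) (hf : HolderOnWith L α f (Ico 0 1)) :
    ∃ A : ℝ, 0 < A ∧ ∀ i k N : ℕ, 0 < i → 0 < k → mu i < N →
      |tensorTerm σ f (Nat.fib (k + N)) (W i k) (Wstar i (k + N) k)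
          - limitTerm σ f (W i k) (-wminus i / φ ^ k)|
        ≤ A / ((φ ^ N) ^ (α : ℝ) * (i : ℝ) ^ (σ - α)) ∧
      |tensorTerm σ f (Nat.fib (k + N)) (W i k) (Wstar i (k + N) k)
          - limitTerm σ f (Wstar i (k + N) k) (wplus i / φ ^ N)|
        ≤ A / ((φ ^ k) ^ (α : ℝ) * (i : ℝ) ^ (σ - α)) := by
  obtain ⟨A, hA, hbound⟩ := exists_abs_tensorTerm_sub_limitTerm_le_div σ hα hf
    (by norm_num : (14 / 15 : ℝ) < 1) (by norm_num : (8 / 15 : ℝ) < 1) 2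
    (by norm_num : (0 : ℝ) < 50)
  refine ⟨A, hA, fun i k N hi hk hN ↦ ?_⟩
  have hi0 : (0 : ℝ) < i := mod_cast hi
  have hF : (0 : ℝ) < Nat.fib (k + N) := mod_cast Nat.fib_pos.2 (Nat.add_pos_left hk N)
  have hX := wplus_div_mem_Ioc hi hN
  have hY := neg_wminus_div_mem_Ioc hi hk
  have hx := W_div_fib_mem_Icc hi hk hN
  have hy := Wstar_div_fib_mem_Icc hi hk hN
  have hx_rel := abs_W_div_fib_div_sub_one_le hi hk hN
  have hy_rel := abs_Wstar_div_fib_div_sub_one_le hi hk hN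
  have hterm := W_mul_Wstar_div_fib_div_mem_Icc hi hk hN
  have hx_mem : (W i k : ℝ) / Nat.fib (k + N) ∈ Ioc 0 (14 / 15) := by
    constructor <;> linarith [hx.1, hx.2, hX.1, hX.2]
  have hy_mem : (Wstar i (k + N) k : ℝ) / Nat.fib (k + N) ∈ Ioc 0 (14 / 15) := by
    constructor <;> linarith [hy.1, hy.2, hY.1, hY.2]
  have hX_mem : wplus i / φ ^ N ∈ Ioc 0 (14 / 15) := ⟨hX.1, hX.2.trans (by norm_num)⟩
  have hY_mem : -wminus i / φ ^ k ∈ Ioc 0 (14 / 15) := ⟨hY.1, hY.2.trans (by norm_num)⟩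
  constructor
  · exact hbound _ _ _ _ _ _ hF hi0 (by positivity) hx_mem hy_mem hY_mem (by linarith [hX.2])
      (by push_cast; linarith [hx.1, hX.1]) (W_div_fib_le hi hk hN) hterm
  · rw [tensorTerm_comm]
    rw [mul_comm] at hterm
    exact hbound _ _ _ _ _ _ hF hi0 (by positivity) hy_mem hx_mem hX_mem (by linarith [hY.2])
      (by push_cast; linarith [hy.1, hY.1]) (Wstar_div_fib_le hi hk hN) hterm

end Wythoff

theorem approximation_quality_general
    (σ : ℝ) (f : ℝ → ℝ) (α : ℝ) (hα0 : 0 ≤ α) (hα1 : α ≤ 1)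
    (hHolder : ∃ L : ℝ, 0 ≤ L ∧ ∀ x ∈ Set.Ico (0 : ℝ) 1, ∀ y ∈ Set.Ico (0 : ℝ) 1,
      |f x - f y| ≤ L * |x - y| ^ α) :
    ∃ A Astar : ℝ, 0 < A ∧ 0 < Astar ∧
      ∀ i n k : ℕ, 0 < i → 0 < k → (k : ℤ) < (n : ℤ) - (mu i : ℤ) →
        |1 / (Nat.fib n : ℝ) ^ σ *
            (f ((W i k : ℝ) / Nat.fib n) / Real.sin (π * (W i k : ℝ) / Nat.fib n) ^ σ) *
            (f ((Wstar i n k : ℝ) / Nat.fib n) /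
              Real.sin (π * (Wstar i n k : ℝ) / Nat.fib n) ^ σ)
          - f 0 / (π ^ σ * (W i k : ℝ) ^ σ) *
            (f (-wminus i * phi ^ (-(k : ℝ))) /
              Real.sin (π * -wminus i * phi ^ (-(k : ℝ))) ^ σ)|
          ≤ A / (phi ^ (α * ((n : ℝ) - (k : ℝ))) * (i : ℝ) ^ (σ - α)) ∧
        |1 / (Nat.fib n : ℝ) ^ σ *
            (f ((W i k : ℝ) / Nat.fib n) / Real.sin (π * (W i k : ℝ) / Nat.fib n) ^ σ) *
            (f ((Wstar i n k : ℝ) / Nat.fib n) /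
              Real.sin (π * (Wstar i n k : ℝ) / Nat.fib n) ^ σ)
          - f (wplus i * phi ^ (-((n : ℝ) - (k : ℝ)))) /
              Real.sin (π * wplus i * phi ^ (-((n : ℝ) - (k : ℝ)))) ^ σ *
            (f 0 / (π ^ σ * (Wstar i n k : ℝ) ^ σ))|
          ≤ Astar / (phi ^ (α * (k : ℝ)) * (i : ℝ) ^ (σ - α)) := by
  obtain ⟨L, hL, hf⟩ := hHolder
  lift α to ℝ≥0 using hα0
  lift L to ℝ≥0 using hL
  obtain ⟨A, hA, hbound⟩ := exists_abs_tensorTerm_W_Wstar_sub_limitTerm_le σ hα1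
    (holderOnWith_of_dist_le hf)
  refine ⟨A, A, hA, hA, fun i n k hi hk hkn ↦ ?_⟩
  obtain ⟨N, rfl⟩ := Nat.exists_eq_add_of_le (show k ≤ n by lia)
  have hpow (j : ℕ) : φ ^ ((α : ℝ) * j) = (φ ^ j) ^ (α : ℝ) := by
    rw [mul_comm, rpow_natCast_mul goldenRatio_pos.le]
  have hdiv (w : ℝ) (j : ℕ) : w * φ ^ (-(j : ℝ)) = w / φ ^ j := by
    rw [rpow_neg goldenRatio_pos.le, rpow_natCast, div_eq_mul_inv]
  rw [Nat.cast_add, add_sub_cancel_left, phi_eq_goldenRatio, hpow, hpow, mul_assoc π,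
    mul_assoc π (wplus i), hdiv, hdiv, mul_comm (_ / sin (π * (wplus i / _)) ^ σ)]
  exact hbound i k N hi hk (by lia)

/-- Quality of the approximation of the terms of the tensor product sum by the
corresponding limit expressions along the rows of the Wythoff array. -/
theorem approximation_quality
    (σ : ℝ) (hσ : 1 < σ) (f : ℝ → ℝ)
    (hper : ∀ t : ℝ, f (t + 1) = f t)
    (α : ℝ) (hα0 : 0 < α) (hα1 : α ≤ 1)
    (hHolder : ∃ L : ℝ, 0 ≤ L ∧ ∀ x ∈ Set.Ico (0 : ℝ) 1, ∀ y ∈ Set.Ico (0 : ℝ) 1,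
      |f x - f y| ≤ L * |x - y| ^ α) :
    ∃ A Astar : ℝ, 0 < A ∧ 0 < Astar ∧
      ∀ i n k : ℕ, 0 < i → 0 < n → 0 < k → (k : ℤ) < (n : ℤ) - (mu i : ℤ) →
        |1 / (Nat.fib n : ℝ) ^ σ *
            (f ((W i k : ℝ) / Nat.fib n) / Real.sin (π * (W i k : ℝ) / Nat.fib n) ^ σ) *
            (f ((Wstar i n k : ℝ) / Nat.fib n) /
              Real.sin (π * (Wstar i n k : ℝ) / Nat.fib n) ^ σ)
          - f 0 / (π ^ σ * (W i k : ℝ) ^ σ) *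
            (f (-wminus i * phi ^ (-(k : ℝ))) /
              Real.sin (π * -wminus i * phi ^ (-(k : ℝ))) ^ σ)|
          ≤ A / (phi ^ (α * ((n : ℝ) - (k : ℝ))) * (i : ℝ) ^ (σ - α)) ∧
        |1 / (Nat.fib n : ℝ) ^ σ *
            (f ((W i k : ℝ) / Nat.fib n) / Real.sin (π * (W i k : ℝ) / Nat.fib n) ^ σ) *
            (f ((Wstar i n k : ℝ) / Nat.fib n) /
              Real.sin (π * (Wstar i n k : ℝ) / Nat.fib n) ^ σ)
          - f (wplus i * phi ^ (-((n : ℝ) - (k : ℝ)))) /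
              Real.sin (π * wplus i * phi ^ (-((n : ℝ) - (k : ℝ)))) ^ σ *
            (f 0 / (π ^ σ * (Wstar i n k : ℝ) ^ σ))|
          ≤ Astar / (phi ^ (α * (k : ℝ)) * (i : ℝ) ^ (σ - α)) := by
  obtain ⟨A, Astar, hA, hAstar, hbound⟩ := approximation_quality_general σ f α hα0.le hα1 hHolder
  exact ⟨A, Astar, hA, hAstar, fun i n k hi _ hk hkn ↦ hbound i n k hi hk hkn⟩
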